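/- Let m ≥ 2 be an integer and N ≥ 4 a real number. Then ∫_{[1/4,1/2]×[−N,N]^{m−1}×[1,N]×[−N,N]^{m−1}} (x^0_1 + x^1_1)/|x^0 + x^1|^{m+1} d(x^0, x^1) ≥ (8m)^{−m−1} N^{m−1} ln(N/4), where the integration variable is (x^0, x^1) ∈ ℝ^m × ℝ^m with x^0 ∈ [1/4,1/2]×[−N,N]^{m−1} and x^1 ∈ [1,N]×[−N,N]^{m−1}, and |·| denotes the Euclidean norm on ℝ^m. (In particular, this lower bound grows faster in N than N^{m−1}, which yields the failure of the singular Brascamp–Lieb L^p bound below the threshold 2^{m−1}.) -/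

import Mathlib

open MeasureTheory Matrix
open scoped ENNReal NNReal BigOperators

noncomputable section

namespace SBL

/-- The set of corners of the `m`-dimensional cube: functions `{1,…,m} → {0,1}`. -/
abbrev Corner (m : ℕ) := Fin m → Fin 2

/-- Index type for `ℝ^{2m}`: coordinates `x^0_i` (left) and `x^1_i` (right). -/
abbrev Idx (m : ℕ) := Fin m ⊕ Fin m

/-- The coordinate of `ℝ^{2m}` selected by the corner `j` at position `i`. -/
def sel {m : ℕ} (j : Corner m) (i : Fin m) : Idx m :=
  if j i = 0 then Sum.inl i else Sum.inr i

/-- The projection `Π_j : ℝ^{2m} → ℝ^m`, `Π_j x = (x_1^{j(1)},…,x_m^{j(m)})`. -/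
def proj {m : ℕ} (j : Corner m) (x : Idx m → ℝ) : Fin m → ℝ := fun i => x (sel j i)

/-- The projection `Π_j` as an `m × 2m` matrix. -/
def projM {m : ℕ} (j : Corner m) : Matrix (Fin m) (Idx m) ℝ :=
  Matrix.of fun i k => if k = sel j i then 1 else 0

/-- `A_j := Π_j J`, the `m × m` matrix obtained by applying `Π_j` to (the columns of) a
`2m × m` matrix `J`, i.e. selecting rows of `J` according to the corner `j`. -/
def Amat {m : ℕ} (J : Matrix (Idx m) (Fin m) ℝ) (j : Corner m) : Matrix (Fin m) (Fin m) ℝ :=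
  Matrix.of fun i k => J (sel j i) k

/-- Euclidean norm on a finite pi type. -/
def en {ι : Type*} [Fintype ι] (x : ι → ℝ) : ℝ := Real.sqrt (∑ i, (x i) ^ 2)

/-- Operator norm of a matrix with respect to the Euclidean norms. -/
def opNorm {ι κ : Type*} [Fintype ι] [Fintype κ] [DecidableEq κ] (A : Matrix ι κ ℝ) : ℝ :=
  ‖LinearMap.toContinuousLinearMap (Matrix.toEuclideanLin A)‖

/-- `Δ`-regularity of a square matrix: `max(‖A‖, |det A|⁻¹) ≤ Δ` (in particular `det A ≠ 0`). -/
def IsReg {m : ℕ} (Δ : ℝ) (A : Matrix (Fin m) (Fin m) ℝ) : Prop :=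
  opNorm A ≤ Δ ∧ A.det ≠ 0 ∧ |A.det|⁻¹ ≤ Δ

/-- A Calderón–Zygmund kernel of order `n` in `ℝ^m`, given by its multiplier `K̂` on
`ℝ^m ∖ {0}`: it is `n` times continuously differentiable there and satisfies the symbol
estimates `‖D^k K̂(η)‖ ≤ |η|^{-k}` for all `k ≤ n`. -/
def IsCZ {m : ℕ} (n : ℕ) (Khat : (Fin m → ℝ) → ℂ) : Prop :=
  ContDiffOn ℝ n Khat {0}ᶜ ∧
  ∀ k : ℕ, k ≤ n → ∀ η : Fin m → ℝ, η ≠ 0 →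
    ‖iteratedFDerivWithin ℝ k Khat {0}ᶜ η‖ ≤ (en η) ^ (-(k : ℝ))

/-- Fourier transform of a (nice) function on `ℝ^{2m}`. -/
def fourierT {m : ℕ} (φ : (Idx m → ℝ) → ℝ) (ξ : Idx m → ℝ) : ℂ :=
  ∫ x : Idx m → ℝ, Complex.exp (-2 * Real.pi * Complex.I * (∑ k, x k * ξ k)) * (φ x : ℂ)

/-- The principal value `p.v. ∫_{ℝ^{2m}} (∏_j F_j(Π_j x)) K(Πx) dx`, defined as
`∫_{ℝ^m} φ̂(−Π^T η) K̂(η) dη` with `φ = ∏_j F_j ∘ Π_j`. -/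
def pv {m : ℕ} (P : Matrix (Fin m) (Idx m) ℝ) (Khat : (Fin m → ℝ) → ℂ)
    (F : Corner m → (Fin m → ℝ) → ℝ) : ℂ :=
  ∫ η : Fin m → ℝ, fourierT (fun x => ∏ j, F j (proj j x)) (-(P.transpose.mulVec η)) * Khat η

/-- Upper `m×m` block `J^0` of a `2m×m` matrix. -/
def Jb0 {m : ℕ} (J : Matrix (Idx m) (Fin m) ℝ) : Matrix (Fin m) (Fin m) ℝ :=
  J.submatrix Sum.inl id

/-- Lower `m×m` block `J^1` of a `2m×m` matrix. -/
def Jb1 {m : ℕ} (J : Matrix (Idx m) (Fin m) ℝ) : Matrix (Fin m) (Fin m) ℝ :=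
  J.submatrix Sum.inr id

/-- `Π^J := (I, −J^0 (J^1)⁻¹)`. -/
def PiJ {m : ℕ} (J : Matrix (Idx m) (Fin m) ℝ) : Matrix (Fin m) (Idx m) ℝ :=
  Matrix.fromCols 1 (-(Jb0 J * (Jb1 J)⁻¹))

/-- The dyadic cube with parameters `Q = (k, n)`: `∏_i [2^k n_i, 2^k (n_i+1))`. -/
def dC {m : ℕ} (Q : ℤ × (Fin m → ℤ)) : Set (Fin m → ℝ) :=
  {x | ∀ i, (2:ℝ)^Q.1 * (Q.2 i : ℝ) ≤ x i ∧ x i < (2:ℝ)^Q.1 * ((Q.2 i : ℝ) + 1)}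

/-- `Q*`: the cube with the same center as `Q` and three times the side length. -/
def dCstar {m : ℕ} (Q : ℤ × (Fin m → ℤ)) : Set (Fin m → ℝ) :=
  {x | ∀ i, (2:ℝ)^Q.1 * ((Q.2 i : ℝ) - 1) ≤ x i ∧ x i < (2:ℝ)^Q.1 * ((Q.2 i : ℝ) + 2)}

/-- A (1/2-)sparse collection of dyadic cubes. -/
def IsSparse {m : ℕ} (S : Set (ℤ × (Fin m → ℤ))) : Prop :=
  ∀ Q ∈ S,
    (∑' Q' : {q : ℤ × (Fin m → ℤ) // q ∈ S ∧ dC q ⊆ dC Q}, volume (dC Q'.val)) ≤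
      2 * volume (dC Q)

/-- The average `[F]_S := (|S|⁻¹ ∫_S |F|^{2^{m-1}})^{2^{1-m}}`. -/
def avg {m : ℕ} (S : Set (Fin m → ℝ)) (F : (Fin m → ℝ) → ℝ) : ℝ :=
  (((volume S).toReal)⁻¹ * ∫ x in S, |F x| ^ (2^(m-1) : ℕ)) ^ ((2:ℝ) ^ ((1:ℤ) - (m:ℤ)))

/-- The closed axis-parallel box `∏_i [a_i, b_i]`. -/
def box {m : ℕ} (a b : Fin m → ℝ) : Set (Fin m → ℝ) := {x | ∀ i, a i ≤ x i ∧ x i ≤ b i}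

/-- Reciprocal eccentricity `ε_R = (min_i |I_i|)/(max_i |I_i|)` of the box `∏_i [a_i,b_i]`. -/
def ecc {m : ℕ} (a b : Fin m → ℝ) : ℝ := (⨅ i, (b i - a i)) / (⨆ i, (b i - a i))

/-- Modified strong maximal function evaluated on a set `S`:
`sup { (ε_R^α)^{2^{1-m}} [F]_R : R ∈ ℛ, S ⊆ R }` (as an extended real). -/
def Mal {m : ℕ} (α : ℝ) (F : (Fin m → ℝ) → ℝ) (S : Set (Fin m → ℝ)) : ℝ≥0∞ :=
  ⨆ (a : Fin m → ℝ) (b : Fin m → ℝ) (_ : ∀ i, a i < b i) (_ : S ⊆ box a b),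
    ENNReal.ofReal ((ecc a b ^ α) ^ ((2:ℝ) ^ ((1:ℤ) - (m:ℤ))) * avg (box a b) F)

/-- `M_α(F)(A𝒯) := sup_{Q ∈ 𝒯} M_α(F)(AQ)`. -/
def MalTree {m : ℕ} (α : ℝ) (F : (Fin m → ℝ) → ℝ) (A : Matrix (Fin m) (Fin m) ℝ)
    (T : Set (ℤ × (Fin m → ℤ))) : ℝ≥0∞ :=
  ⨆ Q ∈ T, Mal α F (A.mulVec '' dC Q)

/-- A convex tree of dyadic cubes with top cube `Qt`. -/
def ConvexTree {m : ℕ} (T : Set (ℤ × (Fin m → ℤ))) (Qt : ℤ × (Fin m → ℤ)) : Prop :=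
  Qt ∈ T ∧ (∀ Q ∈ T, dC Q ⊆ dC Qt) ∧
  ∀ Q ∈ T, ∀ Q' : ℤ × (Fin m → ℤ), dC Q ⊆ dC Q' → dC Q' ⊆ dC Qt → Q' ∈ T

/-- The Gaussian `g(x) = e^{−π|x|²}` on `ℝ^{2m}`. -/
def gss {m : ℕ} (x : Idx m → ℝ) : ℝ := Real.exp (-Real.pi * ∑ k, (x k) ^ 2)

/-- The mixed partial derivative `∂^0_i ∂^1_i g`. -/
def ddg {m : ℕ} (i : Fin m) (x : Idx m → ℝ) : ℝ :=
  fderiv ℝ (fun y : Idx m → ℝ => fderiv ℝ gss y (Pi.single (Sum.inl i) (1:ℝ))) x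
    (Pi.single (Sum.inr i) (1:ℝ))

/-- Isotropic `L¹` dilation on `ℝ^{2m}`: `φ_t(x) = t^{-2m} φ(t⁻¹ x)`. -/
def dil {m : ℕ} (t : ℝ) (φ : (Idx m → ℝ) → ℝ) (x : Idx m → ℝ) : ℝ :=
  (t ^ (2*m))⁻¹ * φ (t⁻¹ • x)

/-- Matrix dilation: `φ_D(x) = (det D)⁻¹ φ(D⁻¹ x)`. -/
def dilM {m : ℕ} (D : Matrix (Idx m) (Idx m) ℝ) (φ : (Idx m → ℝ) → ℝ) (x : Idx m → ℝ) : ℝ :=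
  (D.det)⁻¹ * φ (D⁻¹.mulVec x)

/-- The region `Ω_𝒯 = ∪_{Q∈𝒯} Q × (ℓ(Q)/2, ℓ(Q))` in the upper half space. -/
def Omega {m : ℕ} (T : Set (ℤ × (Fin m → ℤ))) : Set ((Fin m → ℝ) × ℝ) :=
  ⋃ Q ∈ T, (dC Q) ×ˢ Set.Ioo ((2:ℝ)^Q.1 / 2) ((2:ℝ)^Q.1)

/-- The localized form `Λ_𝒯((F_j)_j)`. -/
def LambdaT {m : ℕ} (J : Matrix (Idx m) (Fin m) ℝ) (T : Set (ℤ × (Fin m → ℤ)))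
    (c : ℝ → ℂ) (u : Idx m → ℝ) (i : Fin m) (F : Corner m → (Fin m → ℝ) → ℝ) : ℂ :=
  ∫ z in Omega T, c z.2 * Complex.ofReal ((1 + en u ^ (4*m))⁻¹ * (z.2)⁻¹ *
    ∫ x : Idx m → ℝ, (∏ j, F j (proj j x)) * dil z.2 (ddg i) (x - J.mulVec z.1 + z.2 • u))

/-- `T_k := ∪ {Q ∈ 𝒯 : ℓ(Q) = 2^k}`. -/
def Tkset {m : ℕ} (T : Set (ℤ × (Fin m → ℤ))) (k : ℤ) : Set (Fin m → ℝ) :=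
  ⋃ Q ∈ {q ∈ T | q.1 = k}, dC Q

/-- The form `Λ̃_𝒯((F_j)_j)` with localization in the `x` variables. -/
def LambdaTilde {m : ℕ} (J : Matrix (Idx m) (Fin m) ℝ) (T : Set (ℤ × (Fin m → ℤ)))
    (c : ℝ → ℂ) (u : Idx m → ℝ) (i : Fin m) (F : Corner m → (Fin m → ℝ) → ℝ) : ℂ :=
  ∑' k : ℤ, ∫ t in Set.Ioc ((2:ℝ)^(k-1)) ((2:ℝ)^k),
    c t * Complex.ofReal ((1 + en u ^ (4*m))⁻¹ * t⁻¹ *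
      ∫ p : Fin m → ℝ, ∫ x : Idx m → ℝ,
        (∏ j, Set.indicator ((Amat J j).mulVec '' Tkset T k) (F j) (proj j x)) *
          dil t (ddg i) (x - J.mulVec p + t • u))

/-- The form `Λ(𝒯,J,K)((F_j)_j)` from the induction proposition. -/
def LambdaK {m : ℕ} (J : Matrix (Idx m) (Fin m) ℝ) (T : Set (ℤ × (Fin m → ℤ)))
    (K : ℝ → (Idx m → ℝ) → ℂ) (F : Corner m → (Fin m → ℝ) → ℝ) : ℂ :=
  ∑' k : ℤ, ∫ x : Idx m → ℝ,
    Complex.ofReal (∏ j, Set.indicator ((Amat J j).mulVec '' Tkset T k) (F j) (proj j x)) *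
      ∫ t in Set.Ioc ((2:ℝ)^(k-1)) ((2:ℝ)^k), K t x * (t : ℂ)⁻¹

/-- The reflected corner `i∗j`, differing from `j` exactly at position `i`. -/
def istar {m : ℕ} (i : Fin m) (j : Corner m) : Corner m :=
  fun k => if k = i then 1 - j i else j k

/-- The diagonal matrix `Θ̃` with entry 0 at positions `i ≤ l` and 1 at positions `i > l`
(1-based), i.e. 0 for `i < l` and 1 otherwise in 0-based indexing. -/
def Th {m : ℕ} (l : ℕ) : Matrix (Fin m) (Fin m) ℝ :=
  Matrix.diagonal fun i => if (i : ℕ) < l then 0 else 1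

/-- The block diagonal matrix `Θ = diag(Θ̃, Θ̃)`. -/
def ThB {m : ℕ} (l : ℕ) : Matrix (Idx m) (Idx m) ℝ :=
  Matrix.diagonal (Sum.elim (fun i : Fin m => if (i:ℕ) < l then (0:ℝ) else 1)
    (fun i : Fin m => if (i:ℕ) < l then (0:ℝ) else 1))

end SBL

/-!
In the variable `y = x⁰ + x¹` the integrand is the kernel `y₁ / |y|^{m+1}`, which is homogeneous of
degree `-m` and comparable to `y₁^{-m}` on the cone `|y_i| ≤ y₁ / 2`. The slice of this cone at
height `y₁ = t` is a cube of volume `t^{m-1}`, so its part `3/2 ≤ y₁ ≤ N` contributes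
`∫ t^{m-1} t^{-m} dt = log (2N/3)` up to a constant. For every
`x⁰ ∈ [1/4, 1/2] × [-N/2, N/2]^{m-1}`, translating this truncated cone by `-x⁰` keeps it inside the
range of `x¹`, and integrating over these `x⁰` yields the factor `N^{m-1} / 4`.
-/

namespace SBL

section Measure

variable {α β : Type*} [MeasurableSpace α] [MeasurableSpace β]

theorem setLIntegral_prod_comp_fst {μ : Measure α} {ν : Measure β} [SFinite ν]
    {s : Set (α × β)} (hs : MeasurableSet s) {f : α → ℝ≥0∞} (hf : Measurable f) :
    ∫⁻ p in s, f p.1 ∂μ.prod ν = ∫⁻ x, f x * ν (Prod.mk x ⁻¹' s) ∂μ := by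
  have hfs : Measurable (s.indicator fun p => f p.1) := (hf.comp measurable_fst).indicator hs
  rw [← lintegral_indicator hs, lintegral_prod _ hfs.aemeasurable]
  refine lintegral_congr fun x => ?_
  rw [← setLIntegral_const, ← lintegral_indicator (measurable_prodMk_left hs)]
  rfl

theorem setLIntegral_prod_comp_add {G : Type*} [AddGroup G] [MeasurableSpace G]
    [MeasurableAdd₂ G] {μ ν : Measure G} [SFinite μ] [SFinite ν] [ν.IsAddLeftInvariant]
    {s t : Set G} (hs : MeasurableSet s) (ht : MeasurableSet t)
    {f : G → ℝ≥0∞} (hf : Measurable f) :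
    ∫⁻ z in {z : G × G | z.1 ∈ s ∧ z.1 + z.2 ∈ t}, f (z.1 + z.2) ∂μ.prod ν =
      μ s * ∫⁻ y in t, f y ∂ν := by
  refine ((measurePreserving_prod_add μ ν).setLIntegral_comp_preimage (hs.prod ht)
    (hf.comp measurable_snd)).trans ?_
  rw [setLIntegral_prod _ (hf.comp measurable_snd).aemeasurable]
  simp only [Function.comp_apply, setLIntegral_const, mul_comm]

end Measure

theorem setLIntegral_Icc_inv {a b : ℝ} (ha : 0 < a) (hab : a ≤ b) :
    ∫⁻ t in Set.Icc a b, ENNReal.ofReal t⁻¹ = ENNReal.ofReal (Real.log (b / a)) := by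
  have hpos : ∀ t ∈ Set.Icc a b, 0 < t := fun t ht => ha.trans_le ht.1
  have hint : IntegrableOn (fun t : ℝ => t⁻¹) (Set.Icc a b) :=
    (continuousOn_inv₀.mono fun t ht => (hpos t ht).ne').integrableOn_Icc
  have hnonneg : ∀ᵐ t ∂volume.restrict (Set.Icc a b), 0 ≤ t⁻¹ :=
    ae_restrict_of_forall_mem measurableSet_Icc fun t ht => (inv_pos.2 (hpos t ht)).le
  rw [← ofReal_integral_eq_lintegral_ofReal hint hnonneg, integral_Icc_eq_integral_Ioc,
    ← intervalIntegral.integral_of_le hab, integral_inv_of_pos ha (ha.trans_le hab)]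

section TruncatedCone

/-- The cone of slope `κ` about the positive first axis of `ℝ × E`, truncated to the heights
`a ≤ t ≤ b`. -/
def truncatedCone (E : Type*) [SeminormedAddCommGroup E] (κ a b : ℝ) : Set (ℝ × E) :=
  Prod.fst ⁻¹' Set.Icc a b ∩ {p | ‖p.2‖ ≤ κ * p.1}

theorem measurableSet_truncatedCone (E : Type*) [SeminormedAddCommGroup E] [MeasurableSpace E]
    [OpensMeasurableSpace E] (κ a b : ℝ) :
    MeasurableSet (truncatedCone E κ a b) :=
  (measurable_fst measurableSet_Icc).inter
    (measurableSet_le (continuous_norm.measurable.comp measurable_snd) (measurable_fst.const_mul κ))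

variable {E : Type*} [NormedAddCommGroup E] [NormedSpace ℝ E] [FiniteDimensional ℝ E]
  [MeasurableSpace E] [BorelSpace E]

theorem measure_mk_preimage_truncatedCone (μ : Measure E) [μ.IsAddHaarMeasure] {κ a b t : ℝ}
    (hκ : 0 ≤ κ) (ha : 0 ≤ a) (ht : t ∈ Set.Icc a b) :
    μ (Prod.mk t ⁻¹' truncatedCone E κ a b) =
      ENNReal.ofReal ((κ * t) ^ Module.finrank ℝ E) * μ (Metric.ball 0 1) := by
  have hball : Prod.mk t ⁻¹' truncatedCone E κ a b = Metric.closedBall 0 (κ * t) := by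
    ext w
    simp [truncatedCone, ht.1, ht.2]
  rw [hball, Measure.addHaar_closedBall μ 0 (mul_nonneg hκ (ha.trans ht.1))]

theorem setLIntegral_truncatedCone_inv_pow (μ : Measure E) [μ.IsAddHaarMeasure] {κ a b : ℝ}
    (hκ : 0 ≤ κ) (ha : 0 < a) (hab : a ≤ b) :
    ∫⁻ p in truncatedCone E κ a b, ENNReal.ofReal (p.1 ^ (Module.finrank ℝ E + 1))⁻¹
        ∂volume.prod μ =
      ENNReal.ofReal (κ ^ Module.finrank ℝ E * Real.log (b / a)) * μ (Metric.ball 0 1) := by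
  have hslice : ∀ t : ℝ,
      ENNReal.ofReal (t ^ (Module.finrank ℝ E + 1))⁻¹ * μ (Prod.mk t ⁻¹' truncatedCone E κ a b) =
        (Set.Icc a b).indicator
          (fun t => ENNReal.ofReal t⁻¹ *
            (ENNReal.ofReal (κ ^ Module.finrank ℝ E) * μ (Metric.ball 0 1))) t := by
    intro t
    by_cases ht : t ∈ Set.Icc a b
    · have ht0 : 0 < t := ha.trans_le ht.1
      rw [measure_mk_preimage_truncatedCone μ hκ ha.le ht, Set.indicator_of_mem ht, ← mul_assoc,
        ← mul_assoc, ← ENNReal.ofReal_mul (by positivity), ← ENNReal.ofReal_mul (by positivity)]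
      congr 2
      rw [mul_pow]
      field_simp
      ring
    · have hempty : Prod.mk t ⁻¹' truncatedCone E κ a b = ∅ :=
        Set.eq_empty_of_forall_notMem fun w hw => ht hw.1
      rw [hempty, measure_empty, mul_zero, Set.indicator_of_notMem ht]
  rw [setLIntegral_prod_comp_fst (f := fun t => ENNReal.ofReal (t ^ (Module.finrank ℝ E + 1))⁻¹)
    (measurableSet_truncatedCone _ κ a b) (by fun_prop), lintegral_congr hslice,
    lintegral_indicator measurableSet_Icc, lintegral_mul_const _ (by fun_prop),
    setLIntegral_Icc_inv ha hab, ← mul_assoc, mul_comm (κ ^ Module.finrank ℝ E),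
    ENNReal.ofReal_mul (Real.log_nonneg ((one_le_div ha).2 hab))]

end TruncatedCone

section EuclideanNorm

variable {ι : Type*} [Fintype ι]

theorem abs_apply_le_en (x : ι → ℝ) (i : ι) : |x i| ≤ en x :=
  Real.abs_le_sqrt (Finset.single_le_sum (f := fun i => x i ^ 2) (fun _ _ => sq_nonneg _)
    (Finset.mem_univ i))

theorem en_le_sqrt_card_mul {x : ι → ℝ} {r : ℝ} (hr : 0 ≤ r) (hx : ∀ i, |x i| ≤ r) :
    en x ≤ √(Fintype.card ι) * r := by
  have hsum : ∑ i, x i ^ 2 ≤ Fintype.card ι * r ^ 2 := by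
    simpa using Finset.sum_le_card_nsmul Finset.univ (fun i => x i ^ 2) (r ^ 2)
      fun i _ => sq_le_sq' (abs_le.1 (hx i)).1 (abs_le.1 (hx i)).2
  calc en x ≤ √(Fintype.card ι * r ^ 2) := Real.sqrt_le_sqrt hsum
    _ = √(Fintype.card ι) * r := by rw [Real.sqrt_mul (Nat.cast_nonneg _), Real.sqrt_sq hr]

theorem continuous_en : Continuous (en : (ι → ℝ) → ℝ) := by
  unfold en
  fun_prop

end EuclideanNorm

section RieszKernel

variable {n : ℕ}

/-- The kernel `y₁ / |y|^{m+1}` on `ℝ^m`, a multiple of the kernel of the first Riesz transform.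
The dimension is `m = n + 1`, and the distinguished coordinate `y₁` is `y 0`. -/
def rieszKernel (y : Fin (n + 1) → ℝ) : ℝ := y 0 / en y ^ (n + 2)

theorem measurable_rieszKernel : Measurable (rieszKernel (n := n)) :=
  (measurable_pi_apply 0).div (continuous_en.measurable.pow_const _)

theorem rieszKernel_nonneg {y : Fin (n + 1) → ℝ} (hy : 0 ≤ y 0) : 0 ≤ rieszKernel y :=
  div_nonneg hy (pow_nonneg (Real.sqrt_nonneg _) _)

theorem continuousOn_rieszKernel :
    ContinuousOn rieszKernel {y : Fin (n + 1) → ℝ | 0 < y 0} :=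
  (continuous_apply 0).continuousOn.div (continuous_en.pow _).continuousOn fun y hy =>
    (pow_pos (lt_of_lt_of_le hy ((le_abs_self _).trans (abs_apply_le_en y 0))) _).ne'

theorem inv_pow_le_rieszKernel {y : Fin (n + 1) → ℝ} (hpos : 0 < y 0) (hy : ∀ i, |y i| ≤ y 0) :
    (√(n + 1) ^ (n + 2))⁻¹ * (y 0 ^ (n + 1))⁻¹ ≤ rieszKernel y := by
  have hen_pos : 0 < en y := hpos.trans_le ((le_abs_self _).trans (abs_apply_le_en y 0))
  have hen_le : en y ≤ √(n + 1) * y 0 := by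
    simpa using en_le_sqrt_card_mul hpos.le hy
  calc (√(n + 1) ^ (n + 2))⁻¹ * (y 0 ^ (n + 1))⁻¹ = y 0 / (√(n + 1) * y 0) ^ (n + 2) := by
        rw [mul_pow, pow_succ (y 0) (n + 1)]
        field_simp
    _ ≤ rieszKernel y := by
        unfold rieszKernel
        gcongr

/-- The cone of slope `κ` about the first coordinate axis of `ℝ^{n+1}`, truncated to the heights
`a ≤ y 0 ≤ b`. Since `Fin n → ℝ` carries the sup norm, its horizontal sections are cubes. -/
def axisCone (n : ℕ) (κ a b : ℝ) : Set (Fin (n + 1) → ℝ) :=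
  MeasurableEquiv.piFinSuccAbove (fun _ => ℝ) 0 ⁻¹' truncatedCone (Fin n → ℝ) κ a b

theorem mem_axisCone {κ a b : ℝ} {y : Fin (n + 1) → ℝ} :
    y ∈ axisCone n κ a b ↔ y 0 ∈ Set.Icc a b ∧ ‖Fin.tail y‖ ≤ κ * y 0 := by
  simp [axisCone, truncatedCone]

theorem measurableSet_axisCone (n : ℕ) (κ a b : ℝ) : MeasurableSet (axisCone n κ a b) :=
  MeasurableEquiv.measurable _ (measurableSet_truncatedCone _ κ a b)

theorem abs_apply_le_of_mem_axisCone {κ a b : ℝ} {y : Fin (n + 1) → ℝ}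
    (hy : y ∈ axisCone n κ a b) (i : Fin n) : |y i.succ| ≤ κ * y 0 :=
  (norm_le_pi_norm (Fin.tail y) i).trans (mem_axisCone.1 hy).2

theorem setLIntegral_axisCone_inv_pow (n : ℕ) {κ a b : ℝ} (hκ : 0 ≤ κ) (ha : 0 < a)
    (hab : a ≤ b) :
    ∫⁻ y in axisCone n κ a b, ENNReal.ofReal (y 0 ^ (n + 1))⁻¹ =
      ENNReal.ofReal ((2 * κ) ^ n * Real.log (b / a)) := by
  have hcone := setLIntegral_truncatedCone_inv_pow (volume : Measure (Fin n → ℝ)) hκ ha hab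
  rw [Module.finrank_fin_fun, Real.volume_pi_ball 0 one_pos, Fintype.card_fin, mul_one,
    ← ENNReal.ofReal_mul' (by positivity), mul_right_comm, ← mul_pow, mul_comm κ] at hcone
  rw [← hcone]
  exact (volume_preserving_piFinSuccAbove (fun _ : Fin (n + 1) => ℝ) 0).setLIntegral_comp_preimage
    (measurableSet_truncatedCone _ κ a b) (f := fun p => ENNReal.ofReal (p.1 ^ (n + 1))⁻¹)
    (by fun_prop)

theorem ofReal_log_le_setLIntegral_axisCone_rieszKernel (n : ℕ) {κ a b : ℝ} (hκ : 0 ≤ κ)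
    (hκ1 : κ ≤ 1) (ha : 0 < a) (hab : a ≤ b) :
    ENNReal.ofReal ((√(n + 1) ^ (n + 2))⁻¹ * ((2 * κ) ^ n * Real.log (b / a))) ≤
      ∫⁻ y in axisCone n κ a b, ENNReal.ofReal (rieszKernel y) := by
  rw [ENNReal.ofReal_mul (by positivity), ← setLIntegral_axisCone_inv_pow n hκ ha hab,
    ← lintegral_const_mul _ (by fun_prop)]
  refine setLIntegral_mono measurable_rieszKernel.ennreal_ofReal fun y hy => ?_
  have hpos : 0 < y 0 := ha.trans_le (mem_axisCone.1 hy).1.1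
  have habs : ∀ i, |y i| ≤ y 0 := Fin.forall_fin_succ.2 ⟨(abs_of_pos hpos).le, fun i =>
    (abs_apply_le_of_mem_axisCone hy i).trans (mul_le_of_le_one_left hpos.le hκ1)⟩
  rw [← ENNReal.ofReal_mul (by positivity)]
  exact ENNReal.ofReal_le_ofReal (inv_pow_le_rieszKernel hpos habs)

end RieszKernel

section Slab

variable {n : ℕ}

/-- The box `[a, b] × [-R, R]^n` in `ℝ^{n+1}`. -/
def slab (n : ℕ) (a b R : ℝ) : Set (Fin (n + 1) → ℝ) :=
  Set.Icc (Fin.cons a fun _ => -R) (Fin.cons b fun _ => R)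

theorem mem_slab {a b R : ℝ} {x : Fin (n + 1) → ℝ} :
    x ∈ slab n a b R ↔ x 0 ∈ Set.Icc a b ∧ ∀ i : Fin n, |x i.succ| ≤ R := by
  simp only [slab, Set.mem_Icc, Pi.le_def, Fin.forall_fin_succ, Fin.cons_zero, Fin.cons_succ,
    abs_le, forall_and]
  tauto

theorem volume_slab (n : ℕ) {a b R : ℝ} (hab : a ≤ b) (hR : 0 ≤ R) :
    volume (slab n a b R) = ENNReal.ofReal ((b - a) * (2 * R) ^ n) := by
  rw [slab, Real.volume_Icc_pi, Fin.prod_univ_succ, ENNReal.ofReal_mul (sub_nonneg.2 hab),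
    ENNReal.ofReal_pow (by positivity)]
  simp [← two_mul]

theorem integrableOn_slab_prod_slab_rieszKernel_add {a b c d : ℝ} (R S : ℝ) (ha : 0 < a)
    (hc : 0 < c) :
    IntegrableOn (fun z : (Fin (n + 1) → ℝ) × (Fin (n + 1) → ℝ) => rieszKernel (z.1 + z.2))
      (slab n a b R ×ˢ slab n c d S) := by
  refine ContinuousOn.integrableOn_compact (isCompact_Icc.prod isCompact_Icc) ?_
  refine continuousOn_rieszKernel.comp (by fun_prop) fun z hz => ?_
  exact add_pos (ha.trans_le (mem_slab.1 hz.1).1.1) (hc.trans_le (mem_slab.1 hz.2).1.1)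

theorem slab_subset_slab {a b R a' b' R' : ℝ} (ha : a' ≤ a) (hb : b ≤ b') (hR : R ≤ R') :
    slab n a b R ⊆ slab n a' b' R' := fun _ hx =>
  mem_slab.2 ((mem_slab.1 hx).imp (fun h => Set.Icc_subset_Icc ha hb h)
    fun h i => (h i).trans hR)

theorem mem_slab_of_add_mem_axisCone {κ a b c d R : ℝ} (hκ : 0 ≤ κ) {x y : Fin (n + 1) → ℝ}
    (hx : x ∈ slab n a b R) (hxy : x + y ∈ axisCone n κ c d) :
    y ∈ slab n (c - b) (d - a) (κ * d + R) := by
  obtain ⟨⟨hx_lower, hx_upper⟩, hx_tail⟩ := mem_slab.1 hx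
  obtain ⟨hxy_lower, hxy_upper⟩ := (mem_axisCone.1 hxy).1
  have hxy_tail : ∀ i : Fin n, |x i.succ + y i.succ| ≤ κ * d := fun i =>
    (abs_apply_le_of_mem_axisCone hxy i).trans (mul_le_mul_of_nonneg_left hxy_upper hκ)
  rw [Pi.add_apply] at hxy_lower hxy_upper
  refine mem_slab.2 ⟨⟨by linarith, by linarith⟩, fun i => ?_⟩
  calc |y i.succ| = |x i.succ + y i.succ - x i.succ| := by rw [add_sub_cancel_left]
    _ ≤ |x i.succ + y i.succ| + |x i.succ| := abs_sub _ _
    _ ≤ κ * d + R := add_le_add (hxy_tail i) (hx_tail i)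

theorem ofReal_log_le_setLIntegral_slab_prod_slab_rieszKernel_add (n : ℕ) {N : ℝ}
    (hN : 3 / 2 ≤ N) :
    ENNReal.ofReal (1 / 4 * N ^ n * ((√(n + 1) ^ (n + 2))⁻¹ * Real.log (2 * N / 3))) ≤
      ∫⁻ z in slab n (1 / 4) (1 / 2) N ×ˢ slab n 1 N N,
        ENNReal.ofReal (rieszKernel (z.1 + z.2)) := by
  have hvolume : volume (slab n (1 / 4) (1 / 2) (N / 2)) = ENNReal.ofReal (1 / 4 * N ^ n) := by
    rw [volume_slab n (by norm_num) (by linarith)]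
    congr 2
    · norm_num
    · ring
  have hcone := ofReal_log_le_setLIntegral_axisCone_rieszKernel n (κ := 1 / 2) (by norm_num)
    (by norm_num) (by norm_num) hN
  rw [mul_one_div_cancel two_ne_zero, one_pow, one_mul, div_div_eq_mul_div, mul_comm N] at hcone
  have hsubset : {z : (Fin (n + 1) → ℝ) × (Fin (n + 1) → ℝ) |
      z.1 ∈ slab n (1 / 4) (1 / 2) (N / 2) ∧ z.1 + z.2 ∈ axisCone n (1 / 2) (3 / 2) N} ⊆
        slab n (1 / 4) (1 / 2) N ×ˢ slab n 1 N N := fun z hz =>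
    ⟨slab_subset_slab le_rfl le_rfl (by linarith) hz.1,
      slab_subset_slab (by norm_num) (by linarith) (by linarith)
        (mem_slab_of_add_mem_axisCone (by norm_num) hz.1 hz.2)⟩
  calc ENNReal.ofReal (1 / 4 * N ^ n * ((√(n + 1) ^ (n + 2))⁻¹ * Real.log (2 * N / 3)))
      ≤ volume (slab n (1 / 4) (1 / 2) (N / 2)) *
          ∫⁻ y in axisCone n (1 / 2) (3 / 2) N, ENNReal.ofReal (rieszKernel y) := by
        rw [ENNReal.ofReal_mul (by positivity), hvolume]
        gcongr
    _ = ∫⁻ z in {z : (Fin (n + 1) → ℝ) × (Fin (n + 1) → ℝ) |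
          z.1 ∈ slab n (1 / 4) (1 / 2) (N / 2) ∧ z.1 + z.2 ∈ axisCone n (1 / 2) (3 / 2) N},
          ENNReal.ofReal (rieszKernel (z.1 + z.2)) :=
        (setLIntegral_prod_comp_add measurableSet_Icc (measurableSet_axisCone n _ _ _)
          measurable_rieszKernel.ennreal_ofReal).symm
    _ ≤ _ := lintegral_mono_set hsubset

theorem log_le_setIntegral_slab_prod_slab_rieszKernel_add (n : ℕ) {N : ℝ} (hN : 3 / 2 ≤ N) :
    1 / 4 * N ^ n * ((√(n + 1) ^ (n + 2))⁻¹ * Real.log (2 * N / 3)) ≤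
      ∫ z in slab n (1 / 4) (1 / 2) N ×ˢ slab n 1 N N, rieszKernel (z.1 + z.2) := by
  have hnonneg : ∀ᵐ z ∂volume.restrict (slab n (1 / 4) (1 / 2) N ×ˢ slab n 1 N N),
      0 ≤ rieszKernel (z.1 + z.2) :=
    ae_restrict_of_forall_mem (measurableSet_Icc.prod measurableSet_Icc) fun z hz =>
      rieszKernel_nonneg (add_nonneg (by linarith [(mem_slab.1 hz.1).1.1])
        (by linarith [(mem_slab.1 hz.2).1.1]))
  rw [← ENNReal.ofReal_le_ofReal_iff (integral_nonneg_of_ae hnonneg),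
    ofReal_integral_eq_lintegral_ofReal
      (integrableOn_slab_prod_slab_rieszKernel_add N N (by norm_num) one_pos) hnonneg]
  exact ofReal_log_le_setLIntegral_slab_prod_slab_rieszKernel_add n hN

end Slab

theorem inv_pow_mul_log_le {m : ℕ} (hm : 1 ≤ m) {N : ℝ} (hN : 4 ≤ N) :
    ((8 * (m : ℝ)) ^ (m + 1))⁻¹ * N ^ (m - 1) * Real.log (N / 4) ≤
      1 / 4 * N ^ (m - 1) * ((√m ^ (m + 1))⁻¹ * Real.log (2 * N / 3)) := by
  have hm1 : (1 : ℝ) ≤ m := by exact_mod_cast hm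
  have hsqrt : √(m : ℝ) ≤ m := Real.sqrt_le_self_iff.2 (Or.inr hm1)
  have hlog : Real.log (N / 4) ≤ Real.log (2 * N / 3) :=
    Real.log_le_log (by positivity) (by linarith)
  have hlog_nonneg : 0 ≤ Real.log (N / 4) := Real.log_nonneg (by linarith)
  have h_const : (4 : ℝ) ≤ 8 ^ (m + 1) :=
    le_trans (by norm_num) (le_self_pow₀ (by norm_num) m.succ_ne_zero)
  calc ((8 * (m : ℝ)) ^ (m + 1))⁻¹ * N ^ (m - 1) * Real.log (N / 4)
      = 1 / 8 ^ (m + 1) * N ^ (m - 1) * (((m : ℝ) ^ (m + 1))⁻¹ * Real.log (N / 4)) := by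
        rw [mul_pow, mul_inv]
        ring
    _ ≤ 1 / 4 * N ^ (m - 1) * ((√m ^ (m + 1))⁻¹ * Real.log (2 * N / 3)) := by
        gcongr

theorem statement18_general (m : ℕ) (hm : 1 ≤ m) (N : ℝ) (hN : 3 / 2 ≤ N) :
    1 / 4 * N ^ (m - 1) * ((√m ^ (m + 1))⁻¹ * Real.log (2 * N / 3)) ≤
      ∫ z in {z : (Fin m → ℝ) × (Fin m → ℝ) |
          (∀ i : Fin m, if (i : ℕ) = 0 then (1 / 4 ≤ z.1 i ∧ z.1 i ≤ 1 / 2)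
            else (-N ≤ z.1 i ∧ z.1 i ≤ N)) ∧
          (∀ i : Fin m, if (i : ℕ) = 0 then (1 ≤ z.2 i ∧ z.2 i ≤ N)
            else (-N ≤ z.2 i ∧ z.2 i ≤ N))},
        (z.1 ⟨0, by omega⟩ + z.2 ⟨0, by omega⟩) / (en (z.1 + z.2)) ^ (m + 1) := by
  obtain ⟨n, rfl⟩ : ∃ n, m = n + 1 := ⟨m - 1, by omega⟩
  have hdomain : {z : (Fin (n + 1) → ℝ) × (Fin (n + 1) → ℝ) |
      (∀ i : Fin (n + 1), if (i : ℕ) = 0 then (1 / 4 ≤ z.1 i ∧ z.1 i ≤ 1 / 2)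
        else (-N ≤ z.1 i ∧ z.1 i ≤ N)) ∧
      (∀ i : Fin (n + 1), if (i : ℕ) = 0 then (1 ≤ z.2 i ∧ z.2 i ≤ N)
        else (-N ≤ z.2 i ∧ z.2 i ≤ N))} = slab n (1 / 4) (1 / 2) N ×ˢ slab n 1 N N := by
    ext z
    simp [mem_slab, Fin.forall_fin_succ, abs_le]
  rw [hdomain, Nat.cast_succ]
  exact log_le_setIntegral_slab_prod_slab_rieszKernel_add n hN

/-- The lower bound for the counterexample integral in the proof of sharpness
(Section 6): the integral over
`[1/4,1/2]×[−N,N]^{m−1} × [1,N]×[−N,N]^{m−1}` of `(x⁰₁+x¹₁)/|x⁰+x¹|^{m+1}`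
is at least `(8m)^{−m−1} N^{m−1} log(N/4)`. -/
theorem statement18 (m : ℕ) (hm : 2 ≤ m) (N : ℝ) (hN : 4 ≤ N) :
    ((8 * (m:ℝ)) ^ (m+1))⁻¹ * N ^ (m-1) * Real.log (N / 4) ≤
      ∫ z in {z : (Fin m → ℝ) × (Fin m → ℝ) |
          (∀ i : Fin m, if (i:ℕ) = 0 then (1/4 ≤ z.1 i ∧ z.1 i ≤ 1/2)
            else (-N ≤ z.1 i ∧ z.1 i ≤ N)) ∧
          (∀ i : Fin m, if (i:ℕ) = 0 then (1 ≤ z.2 i ∧ z.2 i ≤ N)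
            else (-N ≤ z.2 i ∧ z.2 i ≤ N))},
        (z.1 ⟨0, by omega⟩ + z.2 ⟨0, by omega⟩) / (en (z.1 + z.2)) ^ (m+1) := by
  exact (inv_pow_mul_log_le (by omega) hN).trans (statement18_general m (by omega) N (by linarith))

end SBL
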